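/- Bounds on the max-information in terms of min-entropies: let ρ_AB be a nonzero sub-normalized state on H_A ⊗ H_B, let ρ_A = Tr_B[ρ_AB], and let λ_max(ρ_A) denote the largest eigenvalue and λ_min⁺(ρ_A) the smallest nonzero eigenvalue of ρ_A. Then −log λ_max(ρ_A) − H_min(A|B)_ρ ≤ I_max(A:B)_ρ ≤ −log λ_min⁺(ρ_A) − H_min(A|B)_ρ. (In the notation of the paper: H_min(A)_ρ − H_min(A|B)_ρ ≤ I_max(A:B)_ρ ≤ H_R(A)_ρ − H_min(A|B)_ρ.) -/

import Mathlib

open scoped Kronecker ComplexOrder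
open Matrix

noncomputable section

/-- Partial trace over the right tensor factor. -/
def ptraceRight {α β : Type*} [Fintype β] (M : Matrix (α × β) (α × β) ℂ) : Matrix α α ℂ :=
  Matrix.of fun i j => ∑ b, M (i, b) (j, b)

/-- The max-information `I_max(A:B)_ρ = inf_{σ_B state} D_max(ρ_AB ‖ ρ_A ⊗ σ_B)`, written
as a single base-2 logarithm of a joint infimum over `λ ≥ 0` and states `σ_B` with
`ρ_AB ≤ λ (ρ_A ⊗ σ_B)` in the Loewner order. -/
def Imax {α β : Type*} [Fintype α] [Fintype β] [DecidableEq α] [DecidableEq β]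
    (ρ : Matrix (α × β) (α × β) ℂ) : ℝ :=
  Real.logb 2 (sInf {lam : ℝ | 0 ≤ lam ∧ ∃ σ : Matrix β β ℂ, σ.PosSemidef ∧ σ.trace = 1 ∧
    (lam • (ptraceRight ρ ⊗ₖ σ) - ρ).PosSemidef})

/-- The conditional min-entropy
`H_min(A|B)_ρ = -log inf {λ > 0 | ρ_AB ≤ λ (1_A ⊗ σ_B) for some state σ_B}`. -/
def Hmin {α β : Type*} [Fintype α] [Fintype β] [DecidableEq α] [DecidableEq β]
    (ρ : Matrix (α × β) (α × β) ℂ) : ℝ :=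
  - Real.logb 2 (sInf {lam : ℝ | 0 < lam ∧ ∃ σ : Matrix β β ℂ, σ.PosSemidef ∧ σ.trace = 1 ∧
    (lam • ((1 : Matrix α α ℂ) ⊗ₖ σ) - ρ).PosSemidef})

/-- Largest eigenvalue of a Hermitian matrix (junk value `0` otherwise). -/
def lambdaMax {n : Type*} [Fintype n] [DecidableEq n] (A : Matrix n n ℂ) : ℝ :=
  if hA : A.IsHermitian then sSup (Set.range hA.eigenvalues) else 0

/-- Smallest nonzero eigenvalue of a Hermitian matrix (junk value `0` otherwise). -/
def lambdaMinPos {n : Type*} [Fintype n] [DecidableEq n] (A : Matrix n n ℂ) : ℝ :=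
  if hA : A.IsHermitian then sInf {t : ℝ | (∃ i, hA.eigenvalues i = t) ∧ t ≠ 0} else 0

lemma aux_sub_kron {α β : Type*} (A B : Matrix α α ℂ) (σ : Matrix β β ℂ) :
    (A - B) ⊗ₖ σ = A ⊗ₖ σ - B ⊗ₖ σ := by
  ext i j
  simp [sub_mul]

lemma aux_trace {α β : Type*} [Fintype α] [Fintype β] [DecidableEq β]
    (ρ : Matrix (α × β) (α × β) ℂ) (Q : Matrix α α ℂ) :
    (ρ * (Q ⊗ₖ (1 : Matrix β β ℂ))).trace = (ptraceRight ρ * Q).trace := by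
  simp only [Matrix.trace, Matrix.diag_apply, Matrix.mul_apply, Fintype.sum_prod_type, ptraceRight,
    Matrix.of_apply, Matrix.kronecker_apply, Matrix.one_apply, Finset.sum_mul]
  refine Finset.sum_congr rfl fun i _ => ?_
  rw [Finset.sum_comm]
  refine Finset.sum_congr rfl fun j _ => ?_
  refine Finset.sum_congr rfl fun b _ => ?_
  simp

lemma aux_ptrace_psd {α β : Type*} [Fintype α] [Fintype β]
    (ρ : Matrix (α × β) (α × β) ℂ) (hρ : ρ.PosSemidef) : (ptraceRight ρ).PosSemidef := by
  have h : ptraceRight ρ = ∑ b, ρ.submatrix (fun a => (a, b)) (fun a => (a, b)) := by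
    ext i j
    simp [ptraceRight, Matrix.sum_apply]
  rw [h]
  exact Matrix.posSemidef_sum _ fun b _ => hρ.submatrix _

lemma aux_conj_psd {n : Type*} [Fintype n] [DecidableEq n] (U : unitary (Matrix n n ℂ))
    (d : n → ℝ) (hd : ∀ i, 0 ≤ d i) :
    (Unitary.conjStarAlgAut ℂ _ U (diagonal (fun i => (d i : ℂ)))).PosSemidef := by
  rw [Unitary.conjStarAlgAut_apply]
  refine PosSemidef.mul_mul_conjTranspose_same (PosSemidef.diagonal ?_) _
  intro i
  simpa using hd i

lemma aux_spec {n : Type*} [Fintype n] [DecidableEq n] (A : Matrix n n ℂ) (hA : A.PosSemidef)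
    (hne : A ≠ 0) : ∃ P : Matrix n n ℂ, Pᴴ = P ∧ P * P = P ∧ A * P = A ∧
      (A - lambdaMinPos A • P).PosSemidef ∧ (lambdaMax A • (1 : Matrix n n ℂ) - A).PosSemidef ∧
      0 < lambdaMinPos A ∧ 0 < lambdaMax A := by
  have hH := hA.isHermitian
  set e := hH.eigenvalues with he
  have he0 : ∀ i, 0 ≤ e i := hA.eigenvalues_nonneg
  set φ := Unitary.conjStarAlgAut ℂ _ hH.eigenvectorUnitary with hφ
  have hsp : A = φ (diagonal (fun i => (e i : ℂ))) := hH.spectral_theorem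
  have hM : lambdaMax A = sSup (Set.range e) := by simp [lambdaMax, hH, he]
  have hm : lambdaMinPos A = sInf {t : ℝ | (∃ i, e i = t) ∧ t ≠ 0} := by
    simp [lambdaMinPos, hH, he]
  have hle : ∀ i, e i ≤ lambdaMax A := fun i => by
    rw [hM]; exact le_csSup (Set.finite_range e).bddAbove ⟨i, rfl⟩
  obtain ⟨i0, hi0⟩ : ∃ i, e i ≠ 0 := by
    by_contra! h
    apply hne
    rw [hsp]
    simp [h]
  have hfin : {t : ℝ | (∃ i, e i = t) ∧ t ≠ 0}.Finite :=
    (Set.finite_range e).subset (fun t ht => ht.1)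
  have hge : ∀ i, e i ≠ 0 → lambdaMinPos A ≤ e i := fun i hi => by
    rw [hm]; exact csInf_le hfin.bddBelow ⟨⟨i, rfl⟩, hi⟩
  have hmpos : 0 < lambdaMinPos A := by
    have hmem := Set.Nonempty.csInf_mem (s := {t : ℝ | (∃ i, e i = t) ∧ t ≠ 0})
      ⟨e i0, ⟨i0, rfl⟩, hi0⟩ hfin
    rw [← hm] at hmem
    obtain ⟨⟨j, hj⟩, h0⟩ := hmem
    rw [← hj] at h0 ⊢
    exact lt_of_le_of_ne (he0 j) (Ne.symm h0)
  have hMpos : 0 < lambdaMax A := lt_of_lt_of_le (lt_of_le_of_ne (he0 i0) (Ne.symm hi0)) (hle i0)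
  refine ⟨φ (diagonal (fun i => (((if e i = 0 then 0 else 1 : ℝ)) : ℂ))), ?_, ?_, ?_, ?_, ?_,
    hmpos, hMpos⟩
  · exact (aux_conj_psd _ _ (fun i => by split_ifs <;> norm_num)).isHermitian
  · rw [← map_mul, diagonal_mul_diagonal]
    congr 2; ext i; split_ifs <;> simp
  · conv_lhs => rw [hsp]
    conv_rhs => rw [hsp]
    rw [← map_mul, diagonal_mul_diagonal]
    congr 2; ext i; split_ifs with h <;> simp [h]
  · have : A - lambdaMinPos A • φ (diagonal (fun i => (((if e i = 0 then 0 else 1 : ℝ)) : ℂ))) =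
        φ (diagonal (fun i => ((e i - lambdaMinPos A * (if e i = 0 then 0 else 1) : ℝ) : ℂ))) := by
      conv_lhs => enter [1]; rw [hsp]
      rw [← Complex.coe_smul, ← map_smul, ← map_sub]
      congr 1; ext i j
      by_cases hij : i = j
      · subst hij; by_cases h : e i = 0 <;> simp [h]
      · simp [hij]
    rw [this]
    refine aux_conj_psd _ _ fun i => ?_
    split_ifs with h
    · simp [h]
    · simpa using hge i h
  · have : lambdaMax A • (1 : Matrix n n ℂ) - A =
        φ (diagonal (fun i => ((lambdaMax A - e i : ℝ) : ℂ))) := by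
      conv_lhs => enter [2]; rw [hsp]
      rw [← Complex.coe_smul, ← map_one φ, ← map_smul, ← map_sub]
      congr 1; ext i j
      by_cases hij : i = j
      · subst hij; simp
      · simp [hij]
    rw [this]
    exact aux_conj_psd _ _ fun i => sub_nonneg.2 (hle i)

open scoped MatrixOrder in
lemma aux_factor {n : Type*} [Fintype n] [DecidableEq n] (A : Matrix n n ℂ) (hA : A.PosSemidef) :
    ∃ C : Matrix n n ℂ, A = Cᴴ * C :=
  CStarAlgebra.nonneg_iff_eq_star_mul_self.1 hA.nonneg

lemma aux_supp {α β : Type*} [Fintype α] [Fintype β] [DecidableEq α] [DecidableEq β]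
    (ρ : Matrix (α × β) (α × β) ℂ) (hρ : ρ.PosSemidef) (P : Matrix α α ℂ) (hP : Pᴴ = P)
    (hPP : P * P = P) (hRP : ptraceRight ρ * P = ptraceRight ρ) :
    (P ⊗ₖ (1 : Matrix β β ℂ))ᴴ * ρ * (P ⊗ₖ (1 : Matrix β β ℂ)) = ρ := by
  obtain ⟨C, hC⟩ := aux_factor ρ hρ
  have hQ : C * ((1 - P) ⊗ₖ (1 : Matrix β β ℂ)) = 0 := by
    rw [← trace_conjTranspose_mul_self_eq_zero_iff]
    have h1 : (C * ((1 - P) ⊗ₖ (1 : Matrix β β ℂ)))ᴴ * (C * ((1 - P) ⊗ₖ (1 : Matrix β β ℂ))) =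
        ((1 - P) ⊗ₖ (1 : Matrix β β ℂ)) * (ρ * ((1 - P) ⊗ₖ (1 : Matrix β β ℂ))) := by
      rw [conjTranspose_mul, conjTranspose_kronecker, hC]
      simp [hP, Matrix.mul_assoc]
    rw [h1, trace_mul_comm, Matrix.mul_assoc, ← mul_kronecker_mul, one_mul, aux_trace]
    have : (1 - P) * (1 - P) = 1 - P := by
      rw [mul_sub, sub_mul, sub_mul, hPP]; simp
    rw [this, mul_sub, hRP]
    simp
  have h2 : C * (P ⊗ₖ (1 : Matrix β β ℂ)) = C := by
    rw [aux_sub_kron, mul_sub, sub_eq_zero] at hQ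
    rw [← hQ]; simp
  have h3 : (P ⊗ₖ (1 : Matrix β β ℂ))ᴴ * Cᴴ = Cᴴ := by
    rw [← conjTranspose_mul, h2]
  rw [hC, ← Matrix.mul_assoc, h3, Matrix.mul_assoc, h2]

lemma aux_rsmul_psd {n : Type*} [Fintype n] (A : Matrix n n ℂ) (hA : A.PosSemidef) (c : ℝ)
    (hc : 0 ≤ c) : (c • A).PosSemidef := hA.smul hc

lemma aux_trace_ge {α : Type*} [Fintype α] [DecidableEq α] (A : Matrix α α ℂ)
    (hA : A.PosSemidef) (hne : A ≠ 0) : ∃ c : ℝ, 0 < c ∧ (c • (1 : Matrix α α ℂ) - A).PosSemidef := by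
  obtain ⟨P, -, -, -, -, h, -, h2⟩ := aux_spec A hA hne
  exact ⟨_, h2, h⟩

/-- **Bounds on the max-information in terms of min-entropies**:
`H_min(A)_ρ − H_min(A|B)_ρ ≤ I_max(A:B)_ρ ≤ H_R(A)_ρ − H_min(A|B)_ρ`, where
`H_min(A)_ρ = −log λ_max(ρ_A)` and `H_R(A)_ρ = −log λ_min⁺(ρ_A)`. -/
theorem imax_minentropy_bounds
    {α β : Type*} [Fintype α] [Fintype β] [DecidableEq α] [DecidableEq β]
    (ρ : Matrix (α × β) (α × β) ℂ)
    (hρ : ρ.PosSemidef) (hρtr : ρ.trace.re ≤ 1) (hρne : ρ ≠ 0) :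
    - Real.logb 2 (lambdaMax (ptraceRight ρ)) - Hmin ρ ≤ Imax ρ ∧
      Imax ρ ≤ - Real.logb 2 (lambdaMinPos (ptraceRight ρ)) - Hmin ρ := by
  have hRpsd := aux_ptrace_psd ρ hρ
  have htr : (ptraceRight ρ).trace = ρ.trace := by
    have := aux_trace ρ 1
    simpa using this.symm
  have htr0 : ρ.trace ≠ 0 := fun h => hρne (hρ.trace_eq_zero_iff.1 h)
  have hRne : ptraceRight ρ ≠ 0 := fun h => htr0 (by rw [← htr, h]; simp)
  have htrpos : 0 < ρ.trace.re := by
    have h := hρ.trace_nonneg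
    have h' : 0 < ρ.trace := lt_of_le_of_ne h (Ne.symm htr0)
    exact (Complex.lt_def.1 h').1
  obtain ⟨P, hP, hPP, hRP, hmP, hM1, hm, hM⟩ := aux_spec _ hRpsd hRne
  have hsupp := aux_supp ρ hρ P hP hPP hRP
  set R := ptraceRight ρ with hR
  set m := lambdaMinPos R
  set M := lambdaMax R
  unfold Imax Hmin
  rw [← hR]
  set SI := {lam : ℝ | 0 ≤ lam ∧ ∃ σ : Matrix β β ℂ, σ.PosSemidef ∧ σ.trace = 1 ∧
    (lam • (R ⊗ₖ σ) - ρ).PosSemidef} with hSI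
  set SH := {lam : ℝ | 0 < lam ∧ ∃ σ : Matrix β β ℂ, σ.PosSemidef ∧ σ.trace = 1 ∧
    (lam • ((1 : Matrix α α ℂ) ⊗ₖ σ) - ρ).PosSemidef} with hSH
  have hIH : ∀ l ∈ SI, l * M ∈ SH := by
    rintro l ⟨hl, σ, hσ, hσ1, hs⟩
    have hl0 : l ≠ 0 := by
      rintro rfl
      have h := hs.trace_nonneg
      have := (Complex.le_def.1 h).1
      simp at this
      linarith
    refine ⟨mul_pos (lt_of_le_of_ne hl (Ne.symm hl0)) hM, σ, hσ, hσ1, ?_⟩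
    have h := (aux_rsmul_psd _ (hM1.kronecker hσ) l hl).add hs
    rw [aux_sub_kron, smul_kronecker, smul_sub, smul_smul] at h
    convert h using 1
    abel
  have hHI : ∀ l ∈ SH, l / m ∈ SI := by
    rintro l ⟨hl, σ, hσ, hσ1, hs⟩
    have hlm : 0 ≤ l / m := (div_pos hl hm).le
    refine ⟨hlm, σ, hσ, hσ1, ?_⟩
    have h1 := hs.conjTranspose_mul_mul_same (P ⊗ₖ (1 : Matrix β β ℂ))
    rw [mul_sub, sub_mul, hsupp, Matrix.mul_smul, Matrix.smul_mul, conjTranspose_kronecker, hP,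
      conjTranspose_one, ← mul_kronecker_mul, ← mul_kronecker_mul, mul_one, mul_one, one_mul,
      hPP] at h1
    have h := (aux_rsmul_psd _ (hmP.kronecker hσ) (l / m) hlm).add h1
    rw [aux_sub_kron, smul_kronecker, smul_sub, smul_smul, div_mul_cancel₀ _ hm.ne'] at h
    convert h using 1
    abel
  have hαβ : Nonempty (α × β) := by
    by_contra h
    rw [not_nonempty_iff] at h
    exact hρne (Subsingleton.elim _ _)
  have hβ : Nonempty β := hαβ.map Prod.snd
  have hα : Nonempty α := hαβ.map Prod.fst
  have hSHne : SH.Nonempty := by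
    obtain ⟨c, hc, h⟩ := aux_trace_ge ρ hρ hρne
    have hd : (0 : ℝ) < Fintype.card β := by exact_mod_cast Fintype.card_pos
    refine ⟨c * Fintype.card β, mul_pos hc hd, ((Fintype.card β : ℝ)⁻¹) • (1 : Matrix β β ℂ),
      aux_rsmul_psd _ PosSemidef.one _ (inv_nonneg.2 hd.le), ?_, ?_⟩
    · have : (Fintype.card β : ℂ) ≠ 0 := by exact_mod_cast hd.ne'
      rw [trace_smul, trace_one, ← Complex.coe_smul]
      simp [this]
    · rw [kronecker_smul, smul_smul, mul_assoc, mul_inv_cancel₀ hd.ne', mul_one, one_kronecker_one]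
      exact h
  have hSIne : SI.Nonempty := by
    obtain ⟨l, hl⟩ := hSHne
    exact ⟨_, hHI l hl⟩
  have hbI : BddBelow SI := ⟨0, fun l hl => hl.1⟩
  have hbH : BddBelow SH := ⟨0, fun l hl => hl.1.le⟩
  have hdα : (0 : ℝ) < Fintype.card α := by exact_mod_cast Fintype.card_pos
  have hHpos : 0 < sInf SH := by
    refine lt_of_lt_of_le (div_pos htrpos hdα) (le_csInf hSHne ?_)
    rintro l ⟨hl, σ, hσ, hσ1, hs⟩
    have h := (Complex.le_def.1 hs.trace_nonneg).1
    rw [trace_sub, trace_smul, trace_kronecker, hσ1, trace_one] at h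
    simp at h
    rw [div_le_iff₀ hdα]
    exact h
  have hle1 : sInf SH / M ≤ sInf SI := by
    refine le_csInf hSIne fun l hl => ?_
    rw [div_le_iff₀ hM]
    exact csInf_le hbH (hIH l hl)
  have hle2 : sInf SI * m ≤ sInf SH := by
    refine le_csInf hSHne fun l hl => ?_
    rw [← le_div_iff₀ hm]
    exact csInf_le hbI (hHI l hl)
  have hIpos : 0 < sInf SI := lt_of_lt_of_le (div_pos hHpos hM) hle1
  constructor
  · have h := Real.logb_le_logb_of_le (b := 2) (by norm_num) (div_pos hHpos hM) hle1
    rw [Real.logb_div hHpos.ne' hM.ne'] at h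
    linarith
  · have h := Real.logb_le_logb_of_le (b := 2) (by norm_num) (mul_pos hIpos hm) hle2
    rw [Real.logb_mul hIpos.ne' hm.ne'] at h
    linarith
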